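/- arXiv:1606.05957 — 2 statements merged into one kernel-verified Lean document; each statement's English description precedes it below -/
import Mathlib

section
/- Let F be a face of the Gelfand–Cetlin polytope P_λ, where λ has block structure k. Then the graph φ(F) contains every terminal vertex (n_i, n−n_i), 0 ≤ i ≤ s, of the ladder diagram Γ_k, as well as the origin (0,0). -/
open Classical

noncomputable section

/-- Partial sums of the (0-indexed) sequence `k`: `nseq k i = k 0 + ⋯ + k (i-1)`;
so `nseq k i` is the paper's `n_i` for the sequence `(k_1, …, k_s) = (k 0, …, k (s-1))`. -/
def nseq (k : ℕ → ℕ) (i : ℕ) : ℕ := ∑ j ∈ Finset.range i, k j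

/-- The set of terminal vertices `T_k = {(n_i, n - n_i) : 0 ≤ i ≤ s}` of the ladder diagram. -/
def terminals (s : ℕ) (k : ℕ → ℕ) : Set (ℕ × ℕ) :=
  {v | ∃ i ≤ s, v = (nseq k i, nseq k s - nseq k i)}

/-- The vertex set of the ladder diagram `Γ_k`. -/
def ladderV (s : ℕ) (k : ℕ → ℕ) : Set (ℕ × ℕ) :=
  {v | ∃ t ∈ terminals s k, v.1 ≤ t.1 ∧ v.2 ≤ t.2}

/-- A unit grid step: one step to the right or one step up. -/
def gridStep (v w : ℕ × ℕ) : Prop :=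
  w = (v.1 + 1, v.2) ∨ w = (v.1, v.2 + 1)

/-- The edge set of the ladder diagram `Γ_k`. -/
def ladderE (s : ℕ) (k : ℕ → ℕ) : Set ((ℕ × ℕ) × (ℕ × ℕ)) :=
  {e | e.1 ∈ ladderV s k ∧ e.2 ∈ ladderV s k ∧ gridStep e.1 e.2}

/-- A combinatorial (directed) graph in the grid `ℤ_{≥0} × ℤ_{≥0}`,
given by a set of vertices and a set of edges. -/
@[ext] structure LGraph where
  V : Set (ℕ × ℕ)
  E : Set ((ℕ × ℕ) × (ℕ × ℕ))

/-- Subgraph inclusion order on grid graphs. -/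
instance : PartialOrder LGraph where
  le γ γ' := γ.V ⊆ γ'.V ∧ γ.E ⊆ γ'.E
  le_refl γ := ⟨subset_rfl, subset_rfl⟩
  le_trans a b c h h' := ⟨h.1.trans h'.1, h.2.trans h'.2⟩
  le_antisymm a b h h' := LGraph.ext (subset_antisymm h.1 h'.1) (subset_antisymm h.2 h'.2)

/-- The ladder diagram `Γ_k` as a grid graph. -/
def ladder (s : ℕ) (k : ℕ → ℕ) : LGraph :=
  ⟨ladderV s k, ladderE s k⟩

/-- A positive path: (the graph of) a shortest path in the ladder diagram `Γ_k`
from the origin `(0,0)` to a terminal vertex. -/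
def IsPositivePath (s : ℕ) (k : ℕ → ℕ) (p : LGraph) : Prop :=
  ∃ (m : ℕ) (f : ℕ → ℕ × ℕ),
    f 0 = (0, 0) ∧ f m ∈ terminals s k ∧
    (∀ i < m, gridStep (f i) (f (i + 1))) ∧
    (∀ i ≤ m, f i ∈ ladderV s k) ∧
    p.V = {v | ∃ i ≤ m, v = f i} ∧
    p.E = {e | ∃ i < m, e = (f i, f (i + 1))}

/-- A face of the ladder diagram `Γ_k`: a subgraph which contains all terminal
vertices and is a union of positive paths. -/
def IsLadderFace (s : ℕ) (k : ℕ → ℕ) (γ : LGraph) : Prop :=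
  terminals s k ⊆ γ.V ∧
  ∃ P : Set LGraph, (∀ p ∈ P, IsPositivePath s k p) ∧
    γ.V = ⋃ p ∈ P, LGraph.V p ∧ γ.E = ⋃ p ∈ P, LGraph.E p

/-- The dimension (first Betti number) of a face of a ladder diagram:
`|E(γ)| - |V(γ)| + 1`. -/
def ldim (γ : LGraph) : ℤ :=
  (γ.E.ncard : ℤ) - (γ.V.ncard : ℤ) + 1

/-- The index set `I = {(i,j) : i,j ≥ 1, i+j ≤ n}` of the coordinates of a
Gelfand–Cetlin pattern. -/
def GCIdx (n : ℕ) : Set (ℕ × ℕ) := {p | 1 ≤ p.1 ∧ 1 ≤ p.2 ∧ p.1 + p.2 ≤ n}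

/-- The entries of a Gelfand–Cetlin pattern `x`, extended by the boundary
condition `x_{i, n+1-i} = λ_i`. -/
def gcEntry (n : ℕ) (lam : ℕ → ℝ) (x : GCIdx n → ℝ) (p : ℕ × ℕ) : ℝ :=
  if h : p ∈ GCIdx n then x ⟨p, h⟩ else lam p.1

/-- The Gelfand–Cetlin polytope `P_λ`: the set of points `(x_{i,j})_{(i,j) ∈ I}`
with `x_{i,j+1} ≥ x_{i,j} ≥ x_{i+1,j}` for all `(i,j) ∈ I`, where
`x_{i,n+1-i} = λ_i`. -/
def GCPoly (n : ℕ) (lam : ℕ → ℝ) : Set (GCIdx n → ℝ) :=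
  {x | ∀ i j : ℕ, (i, j) ∈ GCIdx n →
    gcEntry n lam x (i, j) ≤ gcEntry n lam x (i, j + 1) ∧
    gcEntry n lam x (i + 1, j) ≤ gcEntry n lam x (i, j)}

/-- The subset of `P_λ` obtained by turning the inequalities
`x_{i,j+1} ≥ x_{i,j}` for `(i,j) ∈ SH` and `x_{i,j} ≥ x_{i+1,j}` for
`(i,j) ∈ SV` into equalities. -/
def GCFaceOf (n : ℕ) (lam : ℕ → ℝ) (SH SV : Set (ℕ × ℕ)) : Set (GCIdx n → ℝ) :=
  {x | x ∈ GCPoly n lam ∧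
    (∀ p ∈ SH, gcEntry n lam x (p.1, p.2 + 1) = gcEntry n lam x p) ∧
    (∀ p ∈ SV, gcEntry n lam x p = gcEntry n lam x (p.1 + 1, p.2))}

/-- A face of the GC polytope: a nonempty solution set of the system obtained
by replacing some of the defining inequalities by equalities. -/
def IsGCFace (n : ℕ) (lam : ℕ → ℝ) (F : Set (GCIdx n → ℝ)) : Prop :=
  F.Nonempty ∧ ∃ SH SV : Set (ℕ × ℕ), SH ⊆ GCIdx n ∧ SV ⊆ GCIdx n ∧
    F = GCFaceOf n lam SH SV

/-- The dimension of (a face of) the GC polytope: the dimension of its affine span. -/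
def GCdim (n : ℕ) (F : Set (GCIdx n → ℝ)) : ℕ :=
  Module.finrank ℝ (affineSpan ℝ F).direction

/-- `lam` (1-indexed) is weakly decreasing with block structure `k`: it is
constant on each block `(n_{i-1}, n_i]` and strictly decreases between
consecutive blocks. -/
def HasBlockStructure (s : ℕ) (k : ℕ → ℕ) (lam : ℕ → ℝ) : Prop :=
  (∀ i < s, ∀ a b : ℕ, nseq k i < a → a ≤ b → b ≤ nseq k (i + 1) → lam a = lam b) ∧
  (∀ i : ℕ, 1 ≤ i → i < s → lam (nseq k i + 1) < lam (nseq k i))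

/-- The edge set of the graph `φ(F)` associated to a subset `F` of the GC polytope. -/
def phiE (n : ℕ) (lam : ℕ → ℝ) (F : Set (GCIdx n → ℝ)) :
    Set ((ℕ × ℕ) × (ℕ × ℕ)) :=
  {e | (∃ i < n, e = ((0, i), (0, i + 1)) ∨ e = ((i, 0), (i + 1, 0))) ∨
    (∃ i j : ℕ, (i, j) ∈ GCIdx n ∧ e = ((i - 1, j), (i, j)) ∧
      ∃ x ∈ F, gcEntry n lam x (i, j) < gcEntry n lam x (i, j + 1)) ∨
    (∃ i j : ℕ, (i, j) ∈ GCIdx n ∧ e = ((i, j - 1), (i, j)) ∧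
      ∃ x ∈ F, gcEntry n lam x (i + 1, j) < gcEntry n lam x (i, j))}

/-- The graph `φ(F)`: its edges are given by `phiE` and its vertices are the
endpoints of its edges. -/
def phiGC (n : ℕ) (lam : ℕ → ℝ) (F : Set (GCIdx n → ℝ)) : LGraph where
  V := {v | ∃ e ∈ phiE n lam F, v = e.1 ∨ v = e.2}
  E := phiE n lam F

/-- The map `ψ`: for a subgraph `γ`, the set of points of `P_λ` where the
inequalities corresponding to the missing edges of `γ` become equalities. -/
def psiGC (n : ℕ) (lam : ℕ → ℝ) (γ : LGraph) : Set (GCIdx n → ℝ) :=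
  {x | x ∈ GCPoly n lam ∧ ∀ i j : ℕ, (i, j) ∈ GCIdx n →
    (((i - 1, j), (i, j)) ∉ γ.E → gcEntry n lam x (i, j) = gcEntry n lam x (i, j + 1)) ∧
    (((i, j - 1), (i, j)) ∉ γ.E → gcEntry n lam x (i, j) = gcEntry n lam x (i + 1, j))}
/-- The recursively defined point `x̄` of the proof of Lemma 2.6 (bijectivity):
`x̄_{i,j} = λ_i` if `i + j = n + 1`, and for `i + j ≤ n` it is determined from
`x̄_{i,j+1}` and `x̄_{i+1,j}` according to which of the two edges
`((i-1,j),(i,j))`, `((i,j-1),(i,j))` belong to `E`. -/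
def barX (n : ℕ) (lam : ℕ → ℝ) (E : Set ((ℕ × ℕ) × (ℕ × ℕ))) : ℕ → ℕ → ℝ
  | i, j =>
    if h1 : n + 1 ≤ i + j then lam i
    else if h2 : ((i - 1, j), (i, j)) ∈ E then
      if h3 : ((i, j - 1), (i, j)) ∈ E then
        (barX n lam E i (j + 1) + barX n lam E (i + 1) j) / 2
      else barX n lam E (i + 1) j
    else barX n lam E i (j + 1)
  termination_by i j => n + 1 - (i + j)
  decreasing_by all_goals omega

/-- `α, β : ℕ → ℕ` encode an element
`w = ((α_1,β_1),…,(α_{s-1},β_{s-1})) ∈ W_{s-1}`, with the conventions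
`α_0 = 0`, `β_0 = 1`, `α_s = 1`, `β_s = 0`. -/
def IsW (s : ℕ) (α β : ℕ → ℕ) : Prop :=
  (∀ i : ℕ, 1 ≤ i → i < s →
    (α i, β i) = (1, 0) ∨ (α i, β i) = (0, 1) ∨ (α i, β i) = (1, 1)) ∧
  α 0 = 0 ∧ β 0 = 1 ∧ α s = 1 ∧ β s = 0

/-- The edge set of the subgraph `g_w` of `Γ_k`: the horizontal edge into the
terminal vertex `v_i` when `α_i = 1` and the vertical edge into `v_i` when
`β_i = 1`. -/
def gwE (s : ℕ) (k α β : ℕ → ℕ) : Set ((ℕ × ℕ) × (ℕ × ℕ)) :=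
  {e | ∃ i ≤ s,
    (α i = 1 ∧
      e = ((nseq k i - 1, nseq k s - nseq k i), (nseq k i, nseq k s - nseq k i))) ∨
    (β i = 1 ∧
      e = ((nseq k i, nseq k s - nseq k i - 1), (nseq k i, nseq k s - nseq k i)))}

/-- The subgraph `g_w` of `Γ_k`. -/
def gwGraph (s : ℕ) (k α β : ℕ → ℕ) : LGraph where
  V := {v | ∃ e ∈ gwE s k α β, v = e.1 ∨ v = e.2}
  E := gwE s k α β

/-- The interleaved sequence `r_w(k) * w̃` of length `2s - 1` (0-indexed):
entry `2j` is `k''_{j+1} = k_{j+1} + 1 - α_{j+1} - β_j` and entry `2j + 1` is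
`w̃_{j+1} = α_{j+1} β_{j+1}`. -/
def rstar (s : ℕ) (k α β : ℕ → ℕ) (t : ℕ) : ℕ :=
  if t % 2 = 0 then k (t / 2) + 1 - α (t / 2 + 1) - β (t / 2)
  else α (t / 2 + 1) * β (t / 2 + 1)

/-- `α`-value of one of the three symbols `(1,0), (0,1), (1,1)`,
encoded as `0, 1, 2 : Fin 3` respectively. -/
def aW3 (c : Fin 3) : ℕ := if c = 1 then 0 else 1

/-- `β`-value of one of the three symbols `(1,0), (0,1), (1,1)`,
encoded as `0, 1, 2 : Fin 3` respectively. -/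
def bW3 (c : Fin 3) : ℕ := if c = 0 then 0 else 1

/-- The function `α` of the element of `W_{s-1}` encoded by
`c : Fin (s-1) → Fin 3` (with the conventions `α_0 = 0`, `α_s = 1`). -/
def alph (s : ℕ) (c : Fin (s - 1) → Fin 3) (i : ℕ) : ℕ :=
  if i = 0 then 0 else if h : i - 1 < s - 1 then aW3 (c ⟨i - 1, h⟩) else 1

/-- The function `β` of the element of `W_{s-1}` encoded by
`c : Fin (s-1) → Fin 3` (with the conventions `β_0 = 1`, `β_s = 0`). -/
def bet (s : ℕ) (c : Fin (s - 1) → Fin 3) (i : ℕ) : ℕ :=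
  if i = 0 then 1 else if h : i - 1 < s - 1 then bW3 (c ⟨i - 1, h⟩) else 0

/-- The interleaved sequence `r_w(k) * w̃` (of length `2s - 1`, 0-indexed) for
the element `w ∈ W_{s-1}` encoded by `c`. -/
def newk (s : ℕ) (c : Fin (s - 1) → Fin 3) (k : ℕ → ℕ) (t : ℕ) : ℕ :=
  if t % 2 = 0 then k (t / 2) + 1 - alph s c (t / 2 + 1) - bet s c (t / 2)
  else alph s c (t / 2 + 1) * bet s c (t / 2 + 1)

/-- `|w| = Σ_{i=1}^{s-1} α_i β_i` for the element `w ∈ W_{s-1}` encoded by `c`. -/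
def wsize (s : ℕ) (c : Fin (s - 1) → Fin 3) : ℕ :=
  ∑ j ∈ Finset.range (s - 1), alph s c (j + 1) * bet s c (j + 1)

/-- The subgraph `g_w` of `Γ_k` for the element `w ∈ W_{s-1}` encoded by `c`. -/
def gwGraph3 (s : ℕ) (k : ℕ → ℕ) (c : Fin (s - 1) → Fin 3) : LGraph :=
  gwGraph s k (alph s c) (bet s c)

/-- Union of two grid graphs (union of vertex sets and of edge sets). -/
def ugraph (γ δ : LGraph) : LGraph := ⟨γ.V ∪ δ.V, γ.E ∪ δ.E⟩

/-- The generating function `F_k(t) = Σ_{γ face of Γ_k} t^{dim γ}` of the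
`f`-vector of the ladder diagram `Γ_k`, as a formal power series in `t`:
the coefficient of `t^d` is the number of faces of `Γ_k` of dimension `d`. -/
def fpol (s : ℕ) (k : ℕ → ℕ) : PowerSeries ℤ :=
  PowerSeries.mk fun d =>
    (Set.ncard {γ : LGraph | IsLadderFace s k γ ∧ ldim γ = (d : ℤ)} : ℤ)

/-- The operator `Π_{i=1}^{s-1} (∂/∂x_i + ∂/∂x_{i+1} + t ∂/∂y_i)` applied to a
polynomial in the variables `x_1, x_2, … , y_1, y_2, …` (the variable `x_{i+1}`
is `Sum.inl i` and `y_{i+1}` is `Sum.inr i`) over `ℚ[t]`. -/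
def Lfold (s : ℕ) (f : MvPolynomial (ℕ ⊕ ℕ) (Polynomial ℚ)) :
    MvPolynomial (ℕ ⊕ ℕ) (Polynomial ℚ) :=
  (List.range (s - 1)).foldl
    (fun g i =>
      MvPolynomial.pderiv (Sum.inl i) g + MvPolynomial.pderiv (Sum.inl (i + 1)) g +
        (Polynomial.X : Polynomial ℚ) • MvPolynomial.pderiv (Sum.inr i) g) f

/-- The operator `D_w = Π_{i=1}^{s-1} (∂/∂x_i)^{1-α_i} (∂/∂x_{i+1})^{1-β_i}
(t ∂/∂y_i)^{α_i β_i}` for the element `w ∈ W_{s-1}` encoded by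
`c : Fin (s-1) → Fin 3` (`0 ↦ (1,0)`, `1 ↦ (0,1)`, `2 ↦ (1,1)`). -/
def DfoldC (s : ℕ) (c : Fin (s - 1) → Fin 3)
    (f : MvPolynomial (ℕ ⊕ ℕ) (Polynomial ℚ)) : MvPolynomial (ℕ ⊕ ℕ) (Polynomial ℚ) :=
  (List.finRange (s - 1)).foldl
    (fun g i =>
      if c i = 0 then MvPolynomial.pderiv (Sum.inl ((i : ℕ) + 1)) g
      else if c i = 1 then MvPolynomial.pderiv (Sum.inl (i : ℕ)) g
      else (Polynomial.X : Polynomial ℚ) • MvPolynomial.pderiv (Sum.inr (i : ℕ)) g) f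

/-- The operator `D_w` for the element `w ∈ W_{s-1}` encoded by `α, β : ℕ → ℕ`. -/
def DfoldW (s : ℕ) (α β : ℕ → ℕ)
    (f : MvPolynomial (ℕ ⊕ ℕ) (Polynomial ℚ)) : MvPolynomial (ℕ ⊕ ℕ) (Polynomial ℚ) :=
  (List.range (s - 1)).foldl
    (fun g j =>
      if α (j + 1) = 1 ∧ β (j + 1) = 1 then
        (Polynomial.X : Polynomial ℚ) • MvPolynomial.pderiv (Sum.inr j) g
      else if α (j + 1) = 1 then MvPolynomial.pderiv (Sum.inl (j + 1)) g
      else MvPolynomial.pderiv (Sum.inl j) g) f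

/-- Substitution of `0` for all the variables `y_j = Sum.inr j`. -/
def setYzero :
    MvPolynomial (ℕ ⊕ ℕ) (Polynomial ℚ) →ₐ[Polynomial ℚ] MvPolynomial (ℕ ⊕ ℕ) (Polynomial ℚ) :=
  MvPolynomial.aeval
    (Sum.elim (fun i => MvPolynomial.X (Sum.inl i)) fun _ => (0 : MvPolynomial (ℕ ⊕ ℕ) (Polynomial ℚ)))
end

/-! At a terminal vertex `(i, j)` with `i + j = n` and `0 < i < n`, both `x_{i+1,j} = λ_{i+1}` and
`x_{i,j+1} = λ_i` are boundary entries, and `λ_{i+1} < λ_i` because `i` is the end of a block.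
So at any point `x` of `F` either `λ_{i+1} < x_{i,j}` or `x_{i,j} < λ_i`, and each alternative is
an edge of `φ(F)` ending at `(i, j)`. The remaining vertices lie on the axes. -/

theorem nseq_mono (k : ℕ → ℕ) : Monotone (nseq k) :=
  fun _ _ hij => Finset.sum_le_sum_of_subset (Finset.range_mono hij)

theorem nseq_pos {s : ℕ} {k : ℕ → ℕ} (hs : 1 ≤ s) (hk : ∀ i < s, 0 < k i) : 0 < nseq k s :=
  Finset.sum_pos (fun i hi => hk i (Finset.mem_range.mp hi)) ⟨0, Finset.mem_range.mpr hs⟩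

theorem HasBlockStructure.lt_at_nseq {s : ℕ} {k : ℕ → ℕ} {lam : ℕ → ℝ}
    (hlam : HasBlockStructure s k lam) {i : ℕ} (hpos : 0 < nseq k i)
    (hlt : nseq k i < nseq k s) : lam (nseq k i + 1) < lam (nseq k i) := by
  have hi : i ≠ 0 := by
    rintro rfl
    exact hpos.ne' (Finset.sum_range_zero k)
  exact hlam.2 i (Nat.one_le_iff_ne_zero.mpr hi) ((nseq_mono k).reflect_lt hlt)

section phiGC

variable {n i j : ℕ} {lam : ℕ → ℝ}

theorem gcEntry_of_lt_add {x : GCIdx n → ℝ} (h : n < i + j) : gcEntry n lam x (i, j) = lam i :=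
  dif_neg fun hij => h.not_ge hij.2.2

variable {F : Set (GCIdx n → ℝ)}

theorem fst_mem_phiGC_V {e : (ℕ × ℕ) × (ℕ × ℕ)} (he : e ∈ phiE n lam F) :
    e.1 ∈ (phiGC n lam F).V :=
  ⟨e, he, Or.inl rfl⟩

theorem snd_mem_phiGC_V {e : (ℕ × ℕ) × (ℕ × ℕ)} (he : e ∈ phiE n lam F) :
    e.2 ∈ (phiGC n lam F).V :=
  ⟨e, he, Or.inr rfl⟩

theorem zero_prod_mem_phiGC_V (hn : 0 < n) (hj : j ≤ n) : (0, j) ∈ (phiGC n lam F).V := by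
  cases j with
  | zero => exact fst_mem_phiGC_V (e := ((0, 0), (0, 1))) (Or.inl ⟨0, hn, Or.inl rfl⟩)
  | succ j => exact snd_mem_phiGC_V (e := ((0, j), (0, j + 1))) (Or.inl ⟨j, hj, Or.inl rfl⟩)

theorem prod_zero_mem_phiGC_V (hn : 0 < n) (hi : i ≤ n) : (i, 0) ∈ (phiGC n lam F).V := by
  cases i with
  | zero => exact zero_prod_mem_phiGC_V hn hi
  | succ i => exact snd_mem_phiGC_V (e := ((i, 0), (i + 1, 0))) (Or.inl ⟨i, hi, Or.inr rfl⟩)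

theorem mem_phiGC_V_of_gcEntry_lt {x : GCIdx n → ℝ} (hx : x ∈ F) (hij : (i, j) ∈ GCIdx n)
    (h : gcEntry n lam x (i + 1, j) < gcEntry n lam x (i, j + 1)) :
    (i, j) ∈ (phiGC n lam F).V := by
  rcases h.gt_or_lt (gcEntry n lam x (i, j)) with hvert | hhor
  · exact snd_mem_phiGC_V (Or.inr (Or.inr ⟨i, j, hij, rfl, x, hx, hvert⟩))
  · exact snd_mem_phiGC_V (Or.inr (Or.inl ⟨i, j, hij, rfl, x, hx, hhor⟩))

theorem mem_phiGC_V_of_lam_lt (hF : F.Nonempty) (hi : 0 < i) (hj : 0 < j) (hij : i + j = n)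
    (h : lam (i + 1) < lam i) : (i, j) ∈ (phiGC n lam F).V := by
  obtain ⟨x, hx⟩ := hF
  refine mem_phiGC_V_of_gcEntry_lt hx ⟨hi, hj, hij.le⟩ ?_
  rwa [gcEntry_of_lt_add (by omega), gcEntry_of_lt_add (by omega)]

end phiGC

theorem phiGC_contains_terminals_general (s : ℕ) (k : ℕ → ℕ) (hn : 0 < nseq k s) (lam : ℕ → ℝ)
    (hlam : ∀ i, 0 < nseq k i → nseq k i < nseq k s → lam (nseq k i + 1) < lam (nseq k i))
    (F : Set (GCIdx (nseq k s) → ℝ)) (hF : F.Nonempty) :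
    terminals s k ⊆ (phiGC (nseq k s) lam F).V ∧
    ((0, 0) : ℕ × ℕ) ∈ (phiGC (nseq k s) lam F).V := by
  refine ⟨?_, zero_prod_mem_phiGC_V hn (Nat.zero_le _)⟩
  rintro _ ⟨i, his, rfl⟩
  rcases Nat.eq_zero_or_pos (nseq k i) with hzero | hpos
  · rw [hzero]
    exact zero_prod_mem_phiGC_V hn (Nat.sub_le _ _)
  rcases (nseq_mono k his).eq_or_lt with hlast | hlt
  · rw [hlast, Nat.sub_self]
    exact prod_zero_mem_phiGC_V hn le_rfl
  · exact mem_phiGC_V_of_lam_lt hF hpos (Nat.sub_pos_of_lt hlt) (Nat.add_sub_of_le hlt.le)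
      (hlam i hpos hlt)

/-- Lemma 2.2. For any face `F` of the Gelfand–Cetlin polytope
`P_λ`, the graph `φ(F)` contains every terminal vertex of the ladder diagram
`Γ_k` as well as the origin `(0,0)`. -/
theorem phiGC_contains_terminals (s : ℕ) (hs : 1 ≤ s) (k : ℕ → ℕ)
    (hk : ∀ i < s, 0 < k i) (lam : ℕ → ℝ) (hlam : HasBlockStructure s k lam)
    (F : Set (GCIdx (nseq k s) → ℝ)) (hF : IsGCFace (nseq k s) lam F) :
    terminals s k ⊆ (phiGC (nseq k s) lam F).V ∧
    ((0, 0) : ℕ × ℕ) ∈ (phiGC (nseq k s) lam F).V :=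
  phiGC_contains_terminals_general s k (nseq_pos hs hk) lam (fun _ => hlam.lt_at_nseq) F hF.1
end

section
/- Let F be a face of the Gelfand–Cetlin polytope P_λ, where λ has block structure k. Then every edge of φ(F) lies on a positive path (a directed path from the origin (0,0) to a terminal vertex of Γ_k) that is entirely contained in φ(F). -/
open Classical

/-!
Write `x_{a,b}` for the entries of a pattern. Around a vertex `(a, b)` with `a, b ≥ 1` the
interlacing inequalities give `x_{a+1,b} ≤ x_{a,b} ≤ x_{a,b+1}`, and also
`x_{a+1,b} ≤ x_{a+1,b+1} ≤ x_{a,b+1}` when `a + b < n`. The edges of `φ(F)` into `(a, b)` are the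
strict inequalities of the first chain, those out of `(a, b)` the strict inequalities of the
second, so an edge enters `(a, b)` if and only if some `x ∈ F` has `x_{a+1,b} < x_{a,b+1}`, if and
only if an edge leaves `(a, b)`. Hence an edge of `φ(F)` can be continued backwards to the origin
and forwards to the antidiagonal `a + b = n`. There the condition reads `λ_{a+1} < λ_a`, so `a` is
one of the `n_i` and the path ends at a terminal vertex.
-/

section Chains

variable {α : Type*}

theorem exists_chain_of_step {r : α → α → Prop} {P : ℕ → α → Prop} {m : ℕ}
    (step : ∀ i < m, ∀ a, P i a → ∃ b, r a b ∧ P (i + 1) b) {a : α} (ha : P 0 a) :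
    ∃ f : ℕ → α, f 0 = a ∧ ∀ i < m, r (f i) (f (i + 1)) := by
  have : Nonempty α := ⟨a⟩
  choose! next hnext using step
  let f : ℕ → α := Nat.rec a next
  have hf (i : ℕ) (hi : i ≤ m) : P i (f i) := by
    induction i with
    | zero => exact ha
    | succ i ih => exact (hnext i hi (f i) (ih (by lia))).2
  exact ⟨f, rfl, fun i hi => (hnext i hi (f i) (hf i hi.le)).1⟩

variable {r : α → α → Prop} {rank : α → ℕ} {u v : α}

theorem exists_chain_from (hrank : ∀ ⦃u v⦄, r u v → rank v = rank u + 1) {n : ℕ}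
    (hout : ∀ ⦃u v⦄, r u v → rank v < n → ∃ w, r v w) (huv : r u v) :
    ∃ f : ℕ → α, f 0 = v ∧ ∀ i, rank v + i < n → r (f i) (f (i + 1)) := by
  obtain ⟨f, hf, hchain⟩ := exists_chain_of_step (r := r) (m := n - rank v)
    (P := fun i b => rank b = rank v + i ∧ ∃ a, r a b)
    (fun i hi b ⟨hb, a, hab⟩ => by
      obtain ⟨c, hbc⟩ := hout hab (by lia)
      exact ⟨c, hbc, by rw [hrank hbc, hb, add_assoc], b, hbc⟩) ⟨rfl, u, huv⟩
  exact ⟨f, hf, fun i hi => hchain i (by lia)⟩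

theorem exists_chain_to (hrank : ∀ ⦃u v⦄, r u v → rank v = rank u + 1)
    (hin : ∀ ⦃u v⦄, r u v → 0 < rank u → ∃ w, r w u) (huv : r u v) :
    ∃ f : ℕ → α, f 0 = u ∧ ∀ i < rank u, r (f (i + 1)) (f i) :=
  exists_chain_of_step (r := Function.swap r)
    (P := fun i a => rank a + i = rank u ∧ ∃ b, r a b)
    (fun i hi a ⟨ha, b, hab⟩ => by
      obtain ⟨c, hca⟩ := hin hab (by lia)
      exact ⟨c, hca, by rw [← ha, hrank hca, add_assoc, add_comm 1], a, hca⟩) ⟨rfl, v, huv⟩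

theorem rank_chain_eq (hrank : ∀ ⦃u v⦄, r u v → rank v = rank u + 1) {n m : ℕ} {f : ℕ → α}
    (hf : ∀ i < n, r (f i) (f (i + 1))) (hmn : m ≤ n) (hm : rank (f m) = m) {i : ℕ}
    (hi : i ≤ n) : rank (f i) = i := by
  have hadd (j : ℕ) (hj : j ≤ n) : rank (f j) = rank (f 0) + j := by
    induction j with
    | zero => rfl
    | succ j ih => rw [hrank (hf j hj), ih (by lia), add_assoc]
  grind

theorem exists_chain_through (hrank : ∀ ⦃u v⦄, r u v → rank v = rank u + 1) {n : ℕ}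
    (hin : ∀ ⦃u v⦄, r u v → 0 < rank u → ∃ w, r w u)
    (hout : ∀ ⦃u v⦄, r u v → rank v < n → ∃ w, r v w) (huv : r u v) :
    ∃ f : ℕ → α, f (rank u) = u ∧ f (rank v) = v ∧ ∀ i < n, r (f i) (f (i + 1)) := by
  obtain ⟨g, hg, hgr⟩ := exists_chain_to hrank hin huv
  obtain ⟨h, hh, hhr⟩ := exists_chain_from hrank hout huv
  have hv := hrank huv
  refine ⟨fun i => if i ≤ rank u then g (rank u - i) else h (i - rank v), by simp [hg],
    by simp [hv, hh], fun i hi => ?_⟩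
  rcases lt_trichotomy i (rank u) with hlt | rfl | hgt
  · have := hgr (rank u - (i + 1)) (by lia)
    rw [show rank u - (i + 1) + 1 = rank u - i by lia] at this
    simpa [hlt.le, Nat.succ_le_of_lt hlt] using this
  · simpa [hg, hv, hh] using huv
  · have := hhr (i - rank v) (by lia)
    rw [show i - rank v + 1 = i + 1 - rank v by lia] at this
    simpa [hgt.not_ge, show ¬ i + 1 ≤ rank u by lia] using this

end Chains

theorem exists_lt_and_le_succ {α : Type*} [LinearOrder α] {f : ℕ → α} {m : ℕ} {a : α}
    (h0 : f 0 < a) (hm : a ≤ f m) : ∃ i < m, f i < a ∧ a ≤ f (i + 1) := by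
  induction m with
  | zero => exact absurd hm h0.not_ge
  | succ m ih =>
    by_cases ham : a ≤ f m
    · obtain ⟨i, hi, hfi⟩ := ih ham
      exact ⟨i, by lia, hfi⟩
    · exact ⟨m, m.lt_succ_self, lt_of_not_ge ham, hm⟩

/-- The sequence `lam` (1-indexed) is constant on each of the first `s` blocks `(n_{i-1}, n_i]`
determined by `k`; this is the first half of `HasBlockStructure`. -/
def IsBlockConstant {α : Type*} (s : ℕ) (k : ℕ → ℕ) (lam : ℕ → α) : Prop :=
  ∀ i < s, ∀ a b : ℕ, nseq k i < a → a ≤ b → b ≤ nseq k (i + 1) → lam a = lam b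

theorem IsBlockConstant.exists_eq_nseq_of_ne {α : Type*} {s : ℕ} {k : ℕ → ℕ} {lam : ℕ → α}
    (hlam : IsBlockConstant s k lam) {a : ℕ} (ha : 0 < a) (has : a ≤ nseq k s)
    (hne : lam a ≠ lam (a + 1)) : ∃ i ≤ s, a = nseq k i := by
  obtain ⟨i, hi, hlt, hle⟩ := exists_lt_and_le_succ (f := nseq k) (by simpa [nseq] using ha) has
  refine ⟨i + 1, hi, hle.antisymm ?_⟩
  by_contra! hlt'
  exact hne (hlam i hi a (a + 1) hlt a.le_succ hlt')

theorem mem_terminals_iff {s : ℕ} {k : ℕ → ℕ} {v : ℕ × ℕ} (hv : v.1 + v.2 = nseq k s) :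
    v ∈ terminals s k ↔ ∃ i ≤ s, v.1 = nseq k i := by
  simp only [terminals, Set.mem_ofPred_eq, Prod.ext_iff]
  grind

theorem gridStep.le {u v : ℕ × ℕ} (h : gridStep u v) : u ≤ v := by
  rcases h with rfl | rfl <;> simp [Prod.le_def]

theorem gridStep.sum_eq {u v : ℕ × ℕ} (h : gridStep u v) : v.1 + v.2 = u.1 + u.2 + 1 := by
  rcases h with rfl | rfl <;> grind

/-- The graph of the path `f 0, f 1, …, f m` in the grid. -/
def LGraph.path (m : ℕ) (f : ℕ → ℕ × ℕ) : LGraph where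
  V := {v | ∃ i ≤ m, v = f i}
  E := {e | ∃ i < m, e = (f i, f (i + 1))}

theorem isPositivePath_path {s : ℕ} {k : ℕ → ℕ} {m : ℕ} {f : ℕ → ℕ × ℕ} (h0 : f 0 = (0, 0))
    (hm : f m ∈ terminals s k) (hstep : ∀ i < m, gridStep (f i) (f (i + 1))) :
    IsPositivePath s k (LGraph.path m f) := by
  have hle (i : ℕ) (hi : i ≤ m) : f i ≤ f m :=
    Nat.decreasingInduction' (P := fun j => f j ≤ f m)
      (fun j hj _ ih => (hstep j hj).le.trans ih) hi le_rfl
  exact ⟨m, f, h0, hm, hstep, fun i hi => ⟨f m, hm, hle i hi⟩, rfl, rfl⟩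

section PhiEdges

variable {n : ℕ} {lam : ℕ → ℝ} {F : Set (GCIdx n → ℝ)} {a b : ℕ} {u v : ℕ × ℕ}

theorem gcEntry_of_lt (x : GCIdx n → ℝ) {p : ℕ × ℕ} (hp : n < p.1 + p.2) :
    gcEntry n lam x p = lam p.1 :=
  dif_neg fun h => h.2.2.not_gt hp

theorem gridStep_of_mem_phiE (h : (u, v) ∈ phiE n lam F) : gridStep u v := by
  simp only [phiE, GCIdx, Set.mem_ofPred_eq, Prod.ext_iff] at h
  simp only [gridStep, Prod.ext_iff]
  grind

theorem sum_le_of_mem_phiE (h : (u, v) ∈ phiE n lam F) : v.1 + v.2 ≤ n := by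
  simp only [phiE, GCIdx, Set.mem_ofPred_eq, Prod.ext_iff] at h
  grind

theorem up_mem_phiE_of_lt (hb : b < n) : ((0, b), (0, b + 1)) ∈ phiE n lam F :=
  .inl ⟨b, hb, .inl rfl⟩

theorem right_mem_phiE_of_lt (ha : a < n) : ((a, 0), (a + 1, 0)) ∈ phiE n lam F :=
  .inl ⟨a, ha, .inr rfl⟩

theorem right_mem_phiE_iff : ((a, b + 1), (a + 1, b + 1)) ∈ phiE n lam F ↔
    a + b + 2 ≤ n ∧
      ∃ x ∈ F, gcEntry n lam x (a + 1, b + 1) < gcEntry n lam x (a + 1, b + 2) := by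
  simp only [phiE, GCIdx, Set.mem_ofPred_eq, Prod.mk.injEq]
  grind

theorem up_mem_phiE_iff : ((a + 1, b), (a + 1, b + 1)) ∈ phiE n lam F ↔
    a + b + 2 ≤ n ∧
      ∃ x ∈ F, gcEntry n lam x (a + 2, b + 1) < gcEntry n lam x (a + 1, b + 1) := by
  simp only [phiE, GCIdx, Set.mem_ofPred_eq, Prod.mk.injEq]
  grind

/-- Some pattern in `F` has `x_{a+1,b} < x_{a,b+1}`: the two entries on either side of the vertex
`(a, b)` on the next antidiagonal differ. -/
def StrictAcross (n : ℕ) (lam : ℕ → ℝ) (F : Set (GCIdx n → ℝ)) (a b : ℕ) : Prop :=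
  ∃ x ∈ F, gcEntry n lam x (a + 1, b) < gcEntry n lam x (a, b + 1)

theorem exists_edge_into_iff (hF : F ⊆ GCPoly n lam) (hab : a + b + 2 ≤ n) :
    (∃ u, (u, (a + 1, b + 1)) ∈ phiE n lam F) ↔ StrictAcross n lam F (a + 1) (b + 1) := by
  have hidx : (a + 1, b + 1) ∈ GCIdx n := ⟨by simp, by simp, by grind⟩
  constructor
  · rintro ⟨u, h⟩
    obtain rfl | rfl : u = (a, b + 1) ∨ u = (a + 1, b) := by
      grind [gridStep_of_mem_phiE h, gridStep]
    · obtain ⟨-, x, hx, hlt⟩ := right_mem_phiE_iff.1 h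
      exact ⟨x, hx, (hF hx _ _ hidx).2.trans_lt hlt⟩
    · obtain ⟨-, x, hx, hlt⟩ := up_mem_phiE_iff.1 h
      exact ⟨x, hx, hlt.trans_le (hF hx _ _ hidx).1⟩
  · rintro ⟨x, hx, hlt⟩
    rcases hlt.gt_or_lt (gcEntry n lam x (a + 1, b + 1)) with h | h
    · exact ⟨(a + 1, b), up_mem_phiE_iff.2 ⟨hab, x, hx, h⟩⟩
    · exact ⟨(a, b + 1), right_mem_phiE_iff.2 ⟨hab, x, hx, h⟩⟩

theorem exists_edge_from_iff (hF : F ⊆ GCPoly n lam) (hab : a + b + 2 < n) :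
    (∃ w, ((a + 1, b + 1), w) ∈ phiE n lam F) ↔ StrictAcross n lam F (a + 1) (b + 1) := by
  have hright : (a + 2, b + 1) ∈ GCIdx n := ⟨by simp, by simp, by grind⟩
  have hup : (a + 1, b + 2) ∈ GCIdx n := ⟨by simp, by simp, by grind⟩
  constructor
  · rintro ⟨w, h⟩
    obtain rfl | rfl := gridStep_of_mem_phiE h
    · obtain ⟨-, x, hx, hlt⟩ := right_mem_phiE_iff.1 h
      exact ⟨x, hx, hlt.trans_le (hF hx _ _ hup).2⟩
    · obtain ⟨-, x, hx, hlt⟩ := up_mem_phiE_iff.1 h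
      exact ⟨x, hx, (hF hx _ _ hright).1.trans_lt hlt⟩
  · rintro ⟨x, hx, hlt⟩
    rcases hlt.gt_or_lt (gcEntry n lam x (a + 2, b + 2)) with h | h
    · exact ⟨(a + 2, b + 1), right_mem_phiE_iff.2 ⟨by lia, x, hx, h⟩⟩
    · exact ⟨(a + 1, b + 2), up_mem_phiE_iff.2 ⟨by lia, x, hx, h⟩⟩

theorem exists_edge_from (hF : F ⊆ GCPoly n lam) (h : (u, v) ∈ phiE n lam F)
    (hv : v.1 + v.2 < n) : ∃ w, (v, w) ∈ phiE n lam F := by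
  match v with
  | (0, b) => exact ⟨_, up_mem_phiE_of_lt (by simpa using hv)⟩
  | (a + 1, 0) => exact ⟨_, right_mem_phiE_of_lt hv⟩
  | (a + 1, b + 1) =>
    have hab : a + b + 2 < n := by grind
    exact (exists_edge_from_iff hF hab).2 <| (exists_edge_into_iff hF hab.le).1 ⟨u, h⟩

theorem exists_edge_into (hF : F ⊆ GCPoly n lam) (h : (u, v) ∈ phiE n lam F)
    (hu : 0 < u.1 + u.2) : ∃ w, (w, u) ∈ phiE n lam F := by
  have hun : u.1 + u.2 < n := by
    have := (gridStep_of_mem_phiE h).sum_eq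
    have := sum_le_of_mem_phiE h
    lia
  match u with
  | (0, b + 1) => exact ⟨_, up_mem_phiE_of_lt (by grind)⟩
  | (a + 1, 0) => exact ⟨_, right_mem_phiE_of_lt (by grind)⟩
  | (a + 1, b + 1) =>
    have hab : a + b + 2 < n := by grind
    exact (exists_edge_into_iff hF hab.le).2 <| (exists_edge_from_iff hF hab).1 ⟨v, h⟩

theorem exists_path_through_edge (hF : F ⊆ GCPoly n lam) (huv : (u, v) ∈ phiE n lam F) :
    ∃ f : ℕ → ℕ × ℕ, f 0 = (0, 0) ∧ (f n).1 + (f n).2 = n ∧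
      (∀ i < n, (f i, f (i + 1)) ∈ phiE n lam F) ∧ ∃ i < n, f i = u ∧ f (i + 1) = v := by
  let r (u v : ℕ × ℕ) : Prop := (u, v) ∈ phiE n lam F
  let rank (v : ℕ × ℕ) : ℕ := v.1 + v.2
  have hrank ⦃u v : ℕ × ℕ⦄ (h : r u v) : rank v = rank u + 1 := (gridStep_of_mem_phiE h).sum_eq
  have hvn : rank v ≤ n := sum_le_of_mem_phiE huv
  obtain ⟨f, hfu, hfv, hf⟩ := exists_chain_through (r := r) (rank := rank) hrank
    (fun _ _ => exists_edge_into hF) (fun _ _ => exists_edge_from hF) huv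
  have hfrank {i : ℕ} (hi : i ≤ n) : rank (f i) = i :=
    rank_chain_eq hrank hf hvn (by rw [hfv]) hi
  have hstart : f 0 = (0, 0) := by
    simpa [rank, Prod.ext_iff] using hfrank n.zero_le
  exact ⟨f, hstart, hfrank le_rfl, hf, rank u, (hrank huv).symm.trans_le hvn, hfu, hrank huv ▸ hfv⟩

theorem LGraph.path_E_subset_phiGC {m : ℕ} {f : ℕ → ℕ × ℕ}
    (hf : ∀ i < m, (f i, f (i + 1)) ∈ phiE n lam F) :
    (LGraph.path m f).E ⊆ (phiGC n lam F).E := by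
  rintro _ ⟨i, hi, rfl⟩
  exact hf i hi

theorem LGraph.path_V_subset_phiGC {m : ℕ} {f : ℕ → ℕ × ℕ} (hm : 0 < m)
    (hf : ∀ i < m, (f i, f (i + 1)) ∈ phiE n lam F) :
    (LGraph.path m f).V ⊆ (phiGC n lam F).V := by
  rintro _ ⟨i, hi, rfl⟩
  match i with
  | 0 => exact ⟨_, hf 0 hm, .inl rfl⟩
  | i + 1 => exact ⟨_, hf i hi, .inr rfl⟩

end PhiEdges

section Polytope

variable {s : ℕ} {k : ℕ → ℕ} {lam : ℕ → ℝ} {F : Set (GCIdx (nseq k s) → ℝ)}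

theorem mem_terminals_of_mem_phiE (hlam : IsBlockConstant s k lam)
    (hF : F ⊆ GCPoly (nseq k s) lam) {u v : ℕ × ℕ} (h : (u, v) ∈ phiE (nseq k s) lam F)
    (hv : v.1 + v.2 = nseq k s) : v ∈ terminals s k := by
  refine (mem_terminals_iff hv).2 ?_
  match v with
  | (0, b) => exact ⟨0, s.zero_le, by simp [nseq]⟩
  | (a + 1, 0) => exact ⟨s, le_rfl, hv⟩
  | (a + 1, b + 1) =>
    obtain ⟨x, -, hlt⟩ := (exists_edge_into_iff hF (by grind)).1 ⟨u, h⟩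
    rw [gcEntry_of_lt x (by grind), gcEntry_of_lt x (by grind)] at hlt
    exact hlam.exists_eq_nseq_of_ne a.succ_pos (by grind) hlt.ne'

theorem phiGC_edge_extends_general (hlam : IsBlockConstant s k lam)
    (hF : F ⊆ GCPoly (nseq k s) lam) :
    ∀ e ∈ (phiGC (nseq k s) lam F).E, ∃ p : LGraph,
      IsPositivePath s k p ∧ e ∈ p.E ∧
      p.V ⊆ (phiGC (nseq k s) lam F).V ∧ p.E ⊆ (phiGC (nseq k s) lam F).E := by
  rintro ⟨u, v⟩ huv
  obtain ⟨f, hstart, hsum, hf, i, hi, rfl, rfl⟩ := exists_path_through_edge hF huv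
  have hpos : 0 < nseq k s := i.zero_le.trans_lt hi
  have hlast : (f (nseq k s - 1), f (nseq k s)) ∈ phiE (nseq k s) lam F := by
    simpa only [Nat.sub_one_add_one hpos.ne'] using hf (nseq k s - 1) (by lia)
  have hend : f (nseq k s) ∈ terminals s k := mem_terminals_of_mem_phiE hlam hF hlast hsum
  exact ⟨LGraph.path (nseq k s) f,
    isPositivePath_path hstart hend fun j hj => gridStep_of_mem_phiE (hf j hj), ⟨i, hi, rfl⟩,
    LGraph.path_V_subset_phiGC hpos hf, LGraph.path_E_subset_phiGC hf⟩

end Polytope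

/-- Lemma 2.3. For any face `F` of the Gelfand–Cetlin polytope
`P_λ`, every edge of `φ(F)` extends to a positive path lying entirely in `φ(F)`. -/
theorem phiGC_edge_extends (s : ℕ) (hs : 1 ≤ s) (k : ℕ → ℕ) (hk : ∀ i < s, 0 < k i)
    (lam : ℕ → ℝ) (hlam : HasBlockStructure s k lam)
    (F : Set (GCIdx (nseq k s) → ℝ)) (hF : IsGCFace (nseq k s) lam F) :
    ∀ e ∈ (phiGC (nseq k s) lam F).E, ∃ p : LGraph,
      IsPositivePath s k p ∧ e ∈ p.E ∧
      p.V ⊆ (phiGC (nseq k s) lam F).V ∧ p.E ⊆ (phiGC (nseq k s) lam F).E := by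
  obtain ⟨-, SH, SV, -, -, rfl⟩ := hF
  exact phiGC_edge_extends_general hlam.1 fun x hx => hx.1
end
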